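/- arXiv:2101.09830 — 5 statements merged into one kernel-verified Lean document; each statement's English description precedes it below -/
import Mathlib

section
/- For every norm ‖·‖ on ℝ^m and every invertible matrix A ∈ ℝ^{m×m}, there exist matrices Q, R ∈ ℝ^{m×m} such that A = QR, R is upper triangular with strictly positive diagonal entries, and the columns Q_1, …, Q_m of Q form a generalized QR system for ‖·‖ (i.e., ‖Q_j‖ = 1 for every j, and for every k and every vector w in the linear span of Q_1, …, Q_{k−1}, ‖Q_k − w‖ ≥ 1). -/
/-!
Let `a k` be the columns of `A` and `V k` the span of `a j`, `j < k`. A point `v k` of `V k` nearest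
to `a k` exists because `V k` is a closed subset of a finite-dimensional, hence proper, normed space
(`exists_best_approx`), and `d k = N (a k - v k)` is positive because the columns of the invertible
matrix `A` are linearly independent. Put `Q k = (d k)⁻¹ • (a k - v k)`. Then `Q j`, `j < k`, span
exactly `V k`: one inclusion gives `N (Q k - w) ≥ 1` by the minimality of `v k`, the other lets
`a k = d k • Q k + v k` be expanded in `Q j`, `j ≤ k`, with coefficient `d k` at `Q k`; these
coefficients form the matrix `R`.
-/

/-- `N` is a norm on `ℝ^m`. -/
def IsNorm {m : ℕ} (N : (Fin m → ℝ) → ℝ) : Prop :=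
  (∀ x, N x = 0 ↔ x = 0) ∧
  (∀ (a : ℝ) (x : Fin m → ℝ), N (a • x) = |a| * N x) ∧
  (∀ x y : Fin m → ℝ, N (x + y) ≤ N x + N y)

/-- `Q 0, …, Q (n-1)` is a generalized QR system for the norm `N` on `ℝ^m`:
every `Q j` has `N`-norm one, and for every `k` and every `w` in the linear span of
the previous vectors `Q j`, `j < k`, we have `N (Q k - w) ≥ 1`. -/
def GenQRSystem {m n : ℕ} (N : (Fin m → ℝ) → ℝ) (Q : Fin n → Fin m → ℝ) : Prop :=
  (∀ j, N (Q j) = 1) ∧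
  ∀ k : Fin n, ∀ w ∈ Submodule.span ℝ (Q '' {j | j < k}), 1 ≤ N (Q k - w)

/-- Existence of a best approximation from a subspace. The space `E` carries no topology, so that
the given norm can be installed as its normed-space structure. -/
lemma exists_best_approx {E : Type*} [AddCommGroup E] [Module ℝ E] [FiniteDimensional ℝ E]
    (N : E → ℝ) (h0 : ∀ x, N x = 0 ↔ x = 0) (hs : ∀ (a : ℝ) (x : E), N (a • x) = |a| * N x)
    (ht : ∀ x y, N (x + y) ≤ N x + N y) (hnn : ∀ x, 0 ≤ N x) (V : Submodule ℝ E) (x : E) :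
    ∃ v ∈ V, ∀ w ∈ V, N (x - v) ≤ N (x - w) := by
  let : Norm E := ⟨N⟩
  have core : NormedSpace.Core ℝ E :=
    { norm_nonneg := hnn
      norm_smul := hs
      norm_triangle := ht
      norm_eq_zero_iff := h0 }
  let : NormedAddCommGroup E := NormedAddCommGroup.ofCore core
  let : NormedSpace ℝ E := NormedSpace.ofCore core
  have : ProperSpace E := FiniteDimensional.proper ℝ E
  obtain ⟨v, hv, hd⟩ := (Submodule.closed_of_finiteDimensional V).exists_infDist_eq_dist
    ⟨0, V.zero_mem⟩ x
  refine ⟨v, hv, fun w hw => ?_⟩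
  have h := Metric.infDist_le_dist_of_mem (x := x) (s := (V : Set E)) hw
  rw [hd, dist_eq_norm, dist_eq_norm] at h
  exact h

lemma IsNorm.nonneg {m : ℕ} {N : (Fin m → ℝ) → ℝ} (hN : IsNorm N) (x : Fin m → ℝ) : 0 ≤ N x := by
  obtain ⟨h0, hs, ht⟩ := hN
  have h1 := ht x ((-1 : ℝ) • x)
  rw [hs] at h1
  have h2 : x + (-1 : ℝ) • x = 0 := by simp
  rw [h2, (h0 0).2 rfl] at h1
  norm_num at h1
  linarith

/-- For every norm on `ℝ^m` and every invertible matrix `A`, there is a factorization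
`A = Q * R` with `R` upper triangular with strictly positive diagonal and the columns of
`Q` a generalized QR system for the norm. -/
theorem generalized_qr_factorization {m : ℕ} (hm : 0 < m)
    (N : (Fin m → ℝ) → ℝ) (hN : IsNorm N)
    (A : Matrix (Fin m) (Fin m) ℝ) (hA : IsUnit A) :
    ∃ Q R : Matrix (Fin m) (Fin m) ℝ,
      A = Q * R ∧
      (∀ i j, j < i → R i j = 0) ∧
      (∀ i, 0 < R i i) ∧
      GenQRSystem N (fun j i => Q i j) := by
  have hnn := hN.nonneg
  obtain ⟨h0, hs, ht⟩ := hN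
  set a : Fin m → Fin m → ℝ := A.col with ha
  have hli : LinearIndependent ℝ a := Matrix.linearIndependent_cols_iff_isUnit.2 hA
  let V : Fin m → Submodule ℝ (Fin m → ℝ) := fun k => Submodule.span ℝ (a '' {j | j < k})
  have hV : Monotone V := fun i j hij =>
    Submodule.span_mono (Set.image_mono fun l (hl : l < i) => lt_of_lt_of_le hl hij)
  have haV : ∀ {j k}, j < k → a j ∈ V k := fun {j k} hjk =>
    Submodule.subset_span ⟨j, hjk, rfl⟩
  choose v hv hmin using fun k => exists_best_approx N h0 hs ht hnn (V k) (a k)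
  set d : Fin m → ℝ := fun k => N (a k - v k) with hd
  have hdpos : ∀ k, 0 < d k := fun k => by
    refine lt_of_le_of_ne (hnn _) fun h => ?_
    have h1 : a k = v k := sub_eq_zero.1 ((h0 _).1 h.symm)
    have h2 : a k ∉ V k := hli.notMem_span_image (by simp)
    exact h2 (h1 ▸ hv k)
  set q : Fin m → Fin m → ℝ := fun k => (d k)⁻¹ • (a k - v k) with hq
  have haq : ∀ k, a k = d k • q k + v k := fun k => by
    simp [hq, smul_smul, (hdpos k).ne']
  have hqV : ∀ k, Submodule.span ℝ (q '' {j | j < k}) ≤ V k := fun k => by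
    rw [Submodule.span_le]
    rintro _ ⟨j, hj, rfl⟩
    exact (V k).smul_mem _ ((V k).sub_mem (haV hj) (hV (le_of_lt hj) (hv j)))
  have hVq : ∀ k, V k ≤ Submodule.span ℝ (q '' {j | j < k}) := fun k => by
    induction k using WellFoundedLT.induction with
    | ind k ih =>
      refine Submodule.span_le.2 ?_
      rintro _ ⟨j, hj, rfl⟩
      rw [haq j]
      refine Submodule.add_mem _
        (Submodule.smul_mem _ _ (Submodule.subset_span ⟨j, hj, rfl⟩)) ?_
      exact Submodule.span_mono (Set.image_mono fun l (hl : l < j) => lt_trans hl hj)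
        (ih j hj (hv j))
  have hcoef : ∀ k, ∃ c : Fin m → ℝ, ∑ j ∈ Finset.univ.filter (· < k), c j • q j = v k :=
    fun k => by
      have h := hVq k (hv k)
      have h' : {j | j < k} = ((Finset.univ.filter (· < k) : Finset (Fin m)) : Set (Fin m)) := by
        ext; simp
      rw [h'] at h
      exact (Submodule.mem_span_image_finset_iff_exists_fun' ℝ).1 h
  choose c hc using hcoef
  refine ⟨Matrix.of fun i j => q j i,
    Matrix.of fun i k => if i < k then c k i else if i = k then d k else 0,
    ?_, ?_, ?_, ?_, ?_⟩
  · ext i k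
    have h1 : A i k = d k * q k i + v k i := by
      have := congrFun (haq k) i
      simpa [ha] using this
    rw [h1, ← hc k, Matrix.mul_apply, Finset.sum_apply, Finset.sum_filter]
    have h2 : d k * q k i = ∑ j, if j = k then d k * q j i else 0 := by simp
    rw [h2, ← Finset.sum_add_distrib]
    refine Finset.sum_congr rfl fun j _ => ?_
    rcases lt_trichotomy j k with h | h | h
    · simp [h, h.ne, mul_comm]
    · simp [h, mul_comm]
    · simp [h.ne', h.not_gt]
  · intro i j hij
    simp [hij.not_gt, hij.ne']
  · intro i
    simpa using hdpos i
  · intro k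
    change N ((d k)⁻¹ • (a k - v k)) = 1
    rw [hs, abs_of_pos (inv_pos.2 (hdpos k))]
    exact inv_mul_cancel₀ (hdpos k).ne'
  · intro k w hw
    change 1 ≤ N (q k - w)
    have h1 : q k - w = (d k)⁻¹ • (a k - (v k + d k • w)) := by
      simp [hq, smul_sub, smul_add, smul_smul, (hdpos k).ne', sub_sub]
    rw [h1, hs, abs_of_pos (inv_pos.2 (hdpos k))]
    have h2 := hmin k _ ((V k).add_mem (hv k) ((V k).smul_mem (d k) (hqV k hw)))
    calc (1 : ℝ) = (d k)⁻¹ * d k := (inv_mul_cancel₀ (hdpos k).ne').symm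
      _ ≤ _ := mul_le_mul_of_nonneg_left h2 (inv_pos.2 (hdpos k)).le
end

section
/- Let ‖·‖ be a norm on ℝ^m and let Q ∈ ℝ^{m×m} be a matrix whose columns Q_1, …, Q_m form a generalized QR system for ‖·‖. Then for every x ∈ ℝ^m, ‖Qx‖ ≥ 2^{−m}‖x‖_∞, where ‖x‖_∞ = max_j |x_j|. -/
lemma GenQRSystem.castSucc {m n : ℕ} {N : (Fin m → ℝ) → ℝ} {Q : Fin (n + 1) → Fin m → ℝ}
    (hQ : GenQRSystem N Q) : GenQRSystem N (fun j : Fin n => Q j.castSucc) := by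
  refine ⟨fun j => hQ.1 _, fun k w hw => hQ.2 k.castSucc w (Submodule.span_mono ?_ hw)⟩
  rintro _ ⟨j, hj, rfl⟩
  exact ⟨j.castSucc, Fin.castSucc_lt_castSucc_iff.2 hj, rfl⟩

lemma GenQRSystem.abs_last_le {m n : ℕ} {N : (Fin m → ℝ) → ℝ} (hN : IsNorm N)
    {Q : Fin (n + 1) → Fin m → ℝ} (hQ : GenQRSystem N Q) (x : Fin (n + 1) → ℝ) :
    |x (Fin.last n)| ≤ N (∑ j, x j • Q j) := by
  by_cases hc : x (Fin.last n) = 0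
  · rw [hc, abs_zero]
    exact hN.nonneg _
  set u := ∑ j : Fin n, x j.castSucc • Q j.castSucc with hu
  have hmem : u ∈ Submodule.span ℝ (Q '' {j | j < Fin.last n}) :=
    Submodule.sum_mem _ fun j _ => Submodule.smul_mem _ _
      (Submodule.subset_span ⟨j.castSucc, Fin.castSucc_lt_last j, rfl⟩)
  have h1 := hQ.2 (Fin.last n) (-((x (Fin.last n))⁻¹ • u))
    (Submodule.neg_mem _ (Submodule.smul_mem _ _ hmem))
  have hv : ∑ j, x j • Q j
      = x (Fin.last n) • (Q (Fin.last n) - -((x (Fin.last n))⁻¹ • u)) := by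
    rw [Fin.sum_univ_castSucc, ← hu, sub_neg_eq_add, smul_add, smul_smul, mul_inv_cancel₀ hc,
      one_smul, add_comm]
  rw [hv, hN.2.1]
  exact le_mul_of_one_le_right (abs_nonneg _) h1

lemma GenQRSystem.abs_coeff_le {m n : ℕ} {N : (Fin m → ℝ) → ℝ} (hN : IsNorm N)
    {Q : Fin n → Fin m → ℝ} (hQ : GenQRSystem N Q) (x : Fin n → ℝ) (i : Fin n) :
    |x i| ≤ 2 ^ n * N (∑ j, x j • Q j) := by
  induction n with
  | zero => exact i.elim0
  | succ n ih =>
    have hlast := hQ.abs_last_le hN x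
    have hnn := hN.nonneg (∑ j, x j • Q j)
    induction i using Fin.lastCases with
    | last => exact hlast.trans (le_mul_of_one_le_left hnn (one_le_pow₀ one_le_two))
    | cast i =>
      have h1 := ih hQ.castSucc (fun j => x j.castSucc) i
      have h2 : N (∑ j : Fin n, x j.castSucc • Q j.castSucc) ≤ 2 * N (∑ j, x j • Q j) := by
        have h3 := hN.2.2 (∑ j, x j • Q j) ((-x (Fin.last n)) • Q (Fin.last n))
        have h4 : ∑ j, x j • Q j + (-x (Fin.last n)) • Q (Fin.last n)
            = ∑ j : Fin n, x j.castSucc • Q j.castSucc := by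
          rw [Fin.sum_univ_castSucc, neg_smul, add_neg_cancel_right]
        rw [h4, hN.2.1, hQ.1, abs_neg, mul_one] at h3
        linarith
      calc |x i.castSucc| ≤ 2 ^ n * N (∑ j : Fin n, x j.castSucc • Q j.castSucc) := h1
        _ ≤ 2 ^ n * (2 * N (∑ j, x j • Q j)) := by gcongr
        _ = 2 ^ (n + 1) * N (∑ j, x j • Q j) := by ring

/-- Inverse bound: if the columns of `Q` form a generalized QR system for the norm `N`,
then `N (Q x) ≥ 2^{-m} ‖x‖_∞` for every `x`.
Here `‖x‖` is the sup norm on `Fin m → ℝ`. -/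
theorem inverse_bound_linfty {m : ℕ}
    (N : (Fin m → ℝ) → ℝ) (hN : IsNorm N)
    (Q : Matrix (Fin m) (Fin m) ℝ)
    (hQ : GenQRSystem N (fun j i => Q i j))
    (x : Fin m → ℝ) :
    (2 : ℝ)⁻¹ ^ m * ‖x‖ ≤ N (Q.mulVec x) := by
  have hv : Q.mulVec x = ∑ j, x j • (fun i => Q i j) := by
    ext i
    simp [Matrix.mulVec, dotProduct, mul_comm]
  have h : ‖x‖ ≤ 2 ^ m * N (Q.mulVec x) :=
    (pi_norm_le_iff_of_nonneg (mul_nonneg (by positivity) (hN.nonneg _))).2 fun i => by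
      rw [hv]
      exact hQ.abs_coeff_le hN x i
  rw [inv_pow]
  exact (inv_mul_le_iff₀ (by positivity)).2 h
end

section
/- Let m be a positive integer and ‖·‖ a norm on ℝ^m. Then there exists a constant C₂ > 0, depending only on m and ‖·‖, such that for every matrix Q ∈ ℝ^{m×m} whose columns form a generalized QR system for ‖·‖ and every x ∈ ℝ^m, one has ‖Qx‖ ≥ C₂‖x‖. -/
namespace IsNorm

variable {m : ℕ} {N : (Fin m → ℝ) → ℝ}

lemma map_zero (hN : IsNorm N) : N 0 = 0 := (hN.1 0).2 rfl

lemma map_neg (hN : IsNorm N) (x : Fin m → ℝ) : N (-x) = N x := by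
  simpa using hN.2.1 (-1) x

lemma nonneg_s9 (hN : IsNorm N) (x : Fin m → ℝ) : 0 ≤ N x := by
  have h := hN.2.2 x (-x)
  rw [add_neg_cancel, hN.map_zero, hN.map_neg] at h
  linarith

lemma sum_le (hN : IsNorm N) {ι : Type*} (s : Finset ι) (f : ι → Fin m → ℝ) :
    N (∑ i ∈ s, f i) ≤ ∑ i ∈ s, N (f i) :=
  Finset.le_sum_of_subadditive N hN.map_zero.le hN.2.2 s f

end IsNorm

namespace GenQRSystem

variable {m n : ℕ} {N : (Fin m → ℝ) → ℝ} {Q : Fin n → Fin m → ℝ}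

/-- The homogeneous form of the defining inequality of a generalized QR system. -/
lemma abs_le_add_smul (hN : IsNorm N) (hQ : GenQRSystem N Q) (k : Fin n) (a : ℝ)
    {w : Fin m → ℝ} (hw : w ∈ Submodule.span ℝ (Q '' {j | j < k})) :
    |a| ≤ N (w + a • Q k) := by
  rcases eq_or_ne a 0 with rfl | ha
  · simpa using hN.nonneg_s9 w
  · have h1 := hQ.2 k (-(a⁻¹ • w)) (neg_mem (Submodule.smul_mem _ _ hw))
    have h2 : w + a • Q k = a • (Q k - -(a⁻¹ • w)) := by
      rw [sub_neg_eq_add, smul_add, smul_inv_smul₀ ha, add_comm]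
    rw [h2, hN.2.1]
    exact le_mul_of_one_le_right (abs_nonneg a) h1

/-- The partial sum `∑_{j < k} x_j Q_j`. -/
def partialSum (Q : Fin n → Fin m → ℝ) (x : Fin n → ℝ) (k : ℕ) : Fin m → ℝ :=
  ∑ j : Fin n with j.val < k, x j • Q j

lemma partialSum_succ (Q : Fin n → Fin m → ℝ) (x : Fin n → ℝ) (k : Fin n) :
    partialSum Q x (k + 1) = partialSum Q x k + x k • Q k := by
  have h : (Finset.univ.filter fun j : Fin n => j.val < k + 1) =
      insert k (Finset.univ.filter fun j : Fin n => j.val < k) := by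
    ext j
    simp only [Finset.mem_filter, Finset.mem_univ, true_and, Finset.mem_insert, Fin.ext_iff]
    omega
  rw [partialSum, h, Finset.sum_insert (by simp), add_comm, partialSum]

lemma partialSum_mem_span (Q : Fin n → Fin m → ℝ) (x : Fin n → ℝ) (k : Fin n) :
    partialSum Q x k ∈ Submodule.span ℝ (Q '' {j | j < k}) := by
  refine Submodule.sum_mem _ fun j hj => Submodule.smul_mem _ _ (Submodule.subset_span ?_)
  exact ⟨j, by simpa using hj, rfl⟩

lemma abs_le_partialSum_succ (hN : IsNorm N) (hQ : GenQRSystem N Q) (x : Fin n → ℝ)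
    (k : Fin n) : |x k| ≤ N (partialSum Q x (k + 1)) := by
  rw [partialSum_succ]
  exact abs_le_add_smul hN hQ k (x k) (partialSum_mem_span Q x k)

lemma partialSum_le_two_mul (hN : IsNorm N) (hQ : GenQRSystem N Q) (x : Fin n → ℝ)
    (k : Fin n) : N (partialSum Q x k) ≤ 2 * N (partialSum Q x (k + 1)) := by
  have h1 := abs_le_partialSum_succ hN hQ x k
  have h2 : partialSum Q x k = partialSum Q x (k + 1) + -(x k • Q k) := by
    rw [partialSum_succ, add_neg_cancel_right]
  have h3 := hN.2.2 (partialSum Q x (k + 1)) (-(x k • Q k))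
  rw [← h2, hN.map_neg, hN.2.1, hQ.1 k] at h3
  linarith

lemma partialSum_le_two_pow_mul (hN : IsNorm N) (hQ : GenQRSystem N Q) (x : Fin n → ℝ)
    (d k : ℕ) (h : k + d = n) :
    N (partialSum Q x k) ≤ 2 ^ d * N (partialSum Q x n) := by
  induction d generalizing k with
  | zero => simp [← h]
  | succ d ih =>
    have h1 := partialSum_le_two_mul hN hQ x ⟨k, by omega⟩
    have h2 := ih (k + 1) (by omega)
    simp only at h1
    rw [pow_succ]
    linarith

/-- Each coefficient of a combination of a generalized QR system is controlled by the norm of the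
combination, with a constant that depends only on the length of the system. -/
lemma abs_coeff_le_s9 (hN : IsNorm N) (hQ : GenQRSystem N Q) (x : Fin n → ℝ) (k : Fin n) :
    |x k| ≤ 2 ^ n * N (∑ j, x j • Q j) := by
  have h1 := abs_le_partialSum_succ hN hQ x k
  have h2 := partialSum_le_two_pow_mul hN hQ x (n - (k + 1)) (k + 1) (by omega)
  have h3 : partialSum Q x n = ∑ j, x j • Q j := by simp [partialSum]
  rw [h3] at h2
  refine (h1.trans h2).trans (mul_le_mul_of_nonneg_right ?_ (hN.nonneg_s9 _))
  exact pow_le_pow_right₀ one_le_two (by omega)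

end GenQRSystem

/-- Inverse bound (Theorem on inverse bounds on Q): there is a constant `C₂ > 0`
depending only on `m` and the norm `N` (in particular independent of `Q`, hence of any
matrix `A` that was factorized to produce `Q`) such that `N (Q x) ≥ C₂ * N x` whenever
the columns of `Q` form a generalized QR system for `N`. -/
theorem inverse_bound {m : ℕ} (hm : 0 < m)
    (N : (Fin m → ℝ) → ℝ) (hN : IsNorm N) :
    ∃ C₂ > (0 : ℝ), ∀ Q : Matrix (Fin m) (Fin m) ℝ,
      GenQRSystem N (fun j i => Q i j) →
      ∀ x : Fin m → ℝ, C₂ * N x ≤ N (Q.mulVec x) := by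
  set B : ℝ := ∑ i, N (Pi.single i 1) with hB
  have hB0 : 0 ≤ B := Finset.sum_nonneg fun i _ => hN.nonneg_s9 _
  have hC : 0 < 2 ^ m * (1 + B) := by positivity
  refine ⟨(2 ^ m * (1 + B))⁻¹, inv_pos.2 hC, fun Q hQ x => ?_⟩
  rw [inv_mul_le_iff₀ hC]
  have hQx : Q.mulVec x = ∑ j, x j • (fun i => Q i j) := by
    ext i
    simp [Matrix.mulVec, dotProduct, mul_comm]
  have hx : x = ∑ i, x i • (Pi.single i 1 : Fin m → ℝ) := pi_eq_sum_univ' x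
  calc N x ≤ ∑ i, N (x i • (Pi.single i 1 : Fin m → ℝ)) := by
        conv_lhs => rw [hx]
        exact hN.sum_le _ _
    _ ≤ ∑ i, 2 ^ m * N (Q.mulVec x) * N (Pi.single i 1) := by
        refine Finset.sum_le_sum fun i _ => ?_
        rw [hN.2.1, hQx]
        exact mul_le_mul_of_nonneg_right (hQ.abs_coeff_le_s9 hN x i) (hN.nonneg_s9 _)
    _ = 2 ^ m * N (Q.mulVec x) * B := by rw [hB, Finset.mul_sum]
    _ ≤ 2 ^ m * (1 + B) * N (Q.mulVec x) := by
        have : 0 ≤ 2 ^ m * N (Q.mulVec x) := mul_nonneg (by positivity) (hN.nonneg_s9 _)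
        linarith
end

section
/- Let ‖·‖ be a norm on ℝ^m and let Q ∈ ℝ^{m×m} be a matrix whose columns form a generalized QR system for ‖·‖. Then for every y ∈ ℝ^m, ‖Q⁻¹y‖_∞ ≤ 2^m ‖y‖, where Q⁻¹ is the inverse of Q and ‖·‖_∞ is the l^∞ norm on ℝ^m. -/
/-- The sum of the terms `x j • q j` with `j < k`. -/
def partialComb {m n : ℕ} (q : Fin n → Fin m → ℝ) (x : Fin n → ℝ) (k : ℕ) : Fin m → ℝ :=
  ∑ j with j.val < k, x j • q j

lemma partialComb_succ {m n : ℕ} (q : Fin n → Fin m → ℝ) (x : Fin n → ℝ) (k : Fin n) :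
    partialComb q x (k.val + 1) = x k • q k + partialComb q x k.val := by
  unfold partialComb
  have h : (Finset.univ.filter fun j : Fin n => j.val < k.val + 1)
      = insert k (Finset.univ.filter fun j : Fin n => j.val < k.val) := by
    ext j
    simp [Fin.ext_iff]
    omega
  rw [h, Finset.sum_insert (by simp)]

lemma partialComb_mem_span {m n : ℕ} (q : Fin n → Fin m → ℝ) (x : Fin n → ℝ) (k : Fin n) :
    partialComb q x k.val ∈ Submodule.span ℝ (q '' {j | j < k}) := by
  refine Submodule.sum_mem _ fun j hj => Submodule.smul_mem _ _ (Submodule.subset_span ?_)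
  exact ⟨j, by simpa using hj, rfl⟩

lemma GenQRSystem.abs_coeff_le_s11 {m n : ℕ} {N : (Fin m → ℝ) → ℝ} (hN : IsNorm N)
    {q : Fin n → Fin m → ℝ} (hq : GenQRSystem N q) (x : Fin n → ℝ) (k : Fin n) :
    |x k| ≤ N (partialComb q x (k.val + 1)) := by
  by_cases hx : x k = 0
  · simpa [hx] using hN.nonneg _
  have h := hq.2 k (-(x k)⁻¹ • partialComb q x k.val)
    (Submodule.smul_mem _ _ (partialComb_mem_span q x k))
  have he : partialComb q x (k.val + 1)
      = x k • (q k - -(x k)⁻¹ • partialComb q x k.val) := by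
    rw [partialComb_succ, neg_smul, sub_neg_eq_add, smul_add, smul_inv_smul₀ hx]
  rw [he, hN.2.1]
  exact le_mul_of_one_le_right (abs_nonneg _) h

/-- Dropping the last term of a partial sum at most doubles its norm. -/
lemma GenQRSystem.norm_partialComb_le {m n : ℕ} {N : (Fin m → ℝ) → ℝ} (hN : IsNorm N)
    {q : Fin n → Fin m → ℝ} (hq : GenQRSystem N q) (x : Fin n → ℝ) (k : Fin n) :
    N (partialComb q x k.val) ≤ 2 * N (partialComb q x (k.val + 1)) := by
  have h1 := hq.abs_coeff_le_s11 hN x k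
  have h2 := hN.2.2 (partialComb q x (k.val + 1)) ((-x k) • q k)
  have he : partialComb q x (k.val + 1) + (-x k) • q k = partialComb q x k.val := by
    rw [partialComb_succ, neg_smul]
    abel
  rw [he, hN.2.1, hq.1, abs_neg, mul_one] at h2
  linarith

lemma GenQRSystem.norm_partialComb_le_pow {m n : ℕ} {N : (Fin m → ℝ) → ℝ} (hN : IsNorm N)
    {q : Fin n → Fin m → ℝ} (hq : GenQRSystem N q) (x : Fin n → ℝ) (d : ℕ) (hd : d ≤ n) :
    N (partialComb q x (n - d)) ≤ 2 ^ d * N (∑ j, x j • q j) := by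
  induction d with
  | zero => simp [partialComb]
  | succ d ih =>
    have h := hq.norm_partialComb_le hN x ⟨n - (d + 1), by omega⟩
    have he : n - (d + 1) + 1 = n - d := by omega
    simp only [he] at h
    have := ih (by omega)
    rw [pow_succ]
    linarith

/-- The lower bound `‖x‖_∞ ≤ 2 ^ n * N (∑ j, x j • q j)`. -/
lemma GenQRSystem.norm_le {m n : ℕ} {N : (Fin m → ℝ) → ℝ} (hN : IsNorm N)
    {q : Fin n → Fin m → ℝ} (hq : GenQRSystem N q) (x : Fin n → ℝ) :
    ‖x‖ ≤ 2 ^ n * N (∑ j, x j • q j) := by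
  have h0 := hN.nonneg (∑ j, x j • q j)
  refine (pi_norm_le_iff_of_nonneg (by positivity)).2 fun k => ?_
  rw [Real.norm_eq_abs]
  have h := hq.norm_partialComb_le_pow hN x (n - (k.val + 1)) (by omega)
  have he : n - (n - (k.val + 1)) = k.val + 1 := by omega
  rw [he] at h
  refine (hq.abs_coeff_le_s11 hN x k).trans (h.trans ?_)
  gcongr
  · norm_num
  · omega

/-- Bound on the inverse: if the columns of `Q` form a generalized QR system for `N`,
then `‖Q⁻¹ y‖_∞ ≤ 2^m * N y` for every `y`.
Here `‖·‖` is the sup norm on `Fin m → ℝ` and `Q⁻¹` is the matrix inverse of `Q`. -/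
theorem inverse_matrix_bound {m : ℕ}
    (N : (Fin m → ℝ) → ℝ) (hN : IsNorm N)
    (Q : Matrix (Fin m) (Fin m) ℝ)
    (hQ : GenQRSystem N (fun j i => Q i j))
    (y : Fin m → ℝ) :
    ‖Q⁻¹.mulVec y‖ ≤ 2 ^ m * N y := by
  have key : ∀ x : Fin m → ℝ, ‖x‖ ≤ 2 ^ m * N (Q.mulVec x) := by
    intro x
    have h := hQ.norm_le hN x
    have he : (∑ j, x j • fun i => Q i j) = Q.mulVec x := by
      ext i
      simp [Matrix.mulVec, dotProduct, mul_comm]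
    rwa [he] at h
  have hinj : Function.Injective Q.mulVec := by
    intro a b hab
    have h := key (a - b)
    rw [Matrix.mulVec_sub, sub_eq_zero.2 hab, (hN.1 0).2 rfl, mul_zero] at h
    exact sub_eq_zero.1 (norm_le_zero_iff.1 h)
  have hdet : IsUnit Q.det :=
    (Matrix.isUnit_iff_isUnit_det Q).1 (Matrix.mulVec_injective_iff_isUnit.1 hinj)
  have h := key (Q⁻¹.mulVec y)
  rwa [Matrix.mulVec_mulVec, Matrix.mul_nonsing_inv Q hdet, Matrix.one_mulVec] at h
end

section
/- Let Q_1, …, Q_m be vectors in the Euclidean space ℝ^m (with the standard inner product and the Euclidean norm ‖·‖₂) forming a generalized QR system for ‖·‖₂: each ‖Q_j‖₂ = 1 and for every k and every w in the linear span of Q_1, …, Q_{k−1}, ‖Q_k − w‖₂ ≥ 1. Then the vectors Q_1, …, Q_m are orthonormal; equivalently, the matrix Q with these columns satisfies QᵀQ = I, i.e., Q⁻¹ = Qᵀ. -/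
/-- Testing the distance condition against `w = c • Q j`, where `c` is the inner product of
columns `j < k`, gives `1 ≤ ‖Q k - c • Q j‖₂² = 1 - c²`, hence `c = 0`. -/
theorem genQR_euclidean_inner_eq_zero {m : ℕ}
    (Q : Matrix (Fin m) (Fin m) ℝ)
    (hQ : GenQRSystem (fun x => Real.sqrt (∑ j, x j ^ 2)) (fun j i => Q i j))
    {j k : Fin m} (hjk : j < k) : ∑ i, Q i j * Q i k = 0 := by
  obtain ⟨c, hc⟩ : ∃ c : ℝ, c = ∑ i, Q i j * Q i k := ⟨_, rfl⟩
  rw [← hc]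
  have hj : ∑ i, Q i j ^ 2 = 1 := Real.sqrt_eq_one.mp (hQ.1 j)
  have hk : ∑ i, Q i k ^ 2 = 1 := Real.sqrt_eq_one.mp (hQ.1 k)
  have h := hQ.2 k (c • fun i => Q i j)
    (Submodule.smul_mem _ c (Submodule.subset_span ⟨j, hjk, rfl⟩))
  have h1 : 1 ≤ ∑ i, (Q i k - c * Q i j) ^ 2 := Real.one_le_sqrt.mp h
  have h2 : ∑ i, (Q i k - c * Q i j) ^ 2 =
      ∑ i, Q i k ^ 2 - 2 * c * ∑ i, Q i j * Q i k + c ^ 2 * ∑ i, Q i j ^ 2 := by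
    rw [Finset.mul_sum, Finset.mul_sum, ← Finset.sum_sub_distrib, ← Finset.sum_add_distrib]
    exact Finset.sum_congr rfl fun i _ => by ring
  rw [h2, hj, hk, ← hc] at h1
  nlinarith

/-- Classic QR as a special case: if the columns of `Q` form a generalized QR system for
the Euclidean norm `‖x‖₂ = sqrt (Σ_j x_j²)`, then the columns are orthonormal with
respect to the standard inner product; equivalently `Qᵀ * Q = 1`, i.e. `Q⁻¹ = Qᵀ`. -/
theorem genQR_euclidean_orthonormal {m : ℕ}
    (Q : Matrix (Fin m) (Fin m) ℝ)
    (hQ : GenQRSystem (fun x => Real.sqrt (∑ j, x j ^ 2)) (fun j i => Q i j)) :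
    (∀ j j' : Fin m, (∑ i, Q i j * Q i j') = if j = j' then 1 else 0) ∧
    Q.transpose * Q = 1 := by
  have h : ∀ j j' : Fin m, (∑ i, Q i j * Q i j') = if j = j' then 1 else 0 := by
    intro j j'
    rcases lt_trichotomy j j' with hlt | rfl | hgt
    · rw [if_neg hlt.ne, genQR_euclidean_inner_eq_zero Q hQ hlt]
    · have hj : ∑ i, Q i j ^ 2 = 1 := Real.sqrt_eq_one.mp (hQ.1 j)
      simpa [sq] using hj
    · rw [if_neg hgt.ne', ← genQR_euclidean_inner_eq_zero Q hQ hgt]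
      exact Finset.sum_congr rfl fun i _ => mul_comm _ _
  refine ⟨h, ?_⟩
  ext j j'
  simpa [Matrix.mul_apply, Matrix.one_apply] using h j j'
end
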